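/- For every finite complex Borel measure μ on ℝ and every z ∈ ℂ with Im z > 0, the function s ↦ e^{izs}·μ̂(s) is integrable on [0,∞), where μ̂(s) := ∫_ℝ e^{−iνs} μ(dν), and the Borel transform of μ satisfies ∫_ℝ (ν − z)⁻¹ μ(dν) = i ∫₀^∞ e^{izs} μ̂(s) ds. -/

import Mathlib

open MeasureTheory

/-- The integral `∫ f dμ` of a complex-valued function against a finite complex Borel measure
`μ`, defined via the Jordan decompositions of the real and imaginary parts of `μ`. -/
noncomputable def cintegral (μ : ComplexMeasure ℝ) (f : ℝ → ℂ) : ℂ :=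
  ((∫ x, f x ∂(ComplexMeasure.re μ).toJordanDecomposition.posPart)
      - ∫ x, f x ∂(ComplexMeasure.re μ).toJordanDecomposition.negPart)
    + Complex.I * ((∫ x, f x ∂(ComplexMeasure.im μ).toJordanDecomposition.posPart)
      - ∫ x, f x ∂(ComplexMeasure.im μ).toJordanDecomposition.negPart)

/-- The Fourier transform `μ̂(s) := ∫ e^{−iνs} μ(dν)` of a finite complex Borel measure. -/
noncomputable def cfourier (μ : ComplexMeasure ℝ) (s : ℝ) : ℂ :=
  cintegral μ (fun ν => Complex.exp (-(Complex.I * ν * s)))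

/-!
For `Im z > 0` the Laplace integral `i ∫₀^∞ e^{i(z-ν)s} ds` equals `(ν - z)⁻¹`. Integrating this
identity against `μ` and exchanging the two integrals gives the theorem; the exchange is legitimate
because `|e^{izs} e^{-iνs}| = e^{-s Im z}` is integrable in `s` and independent of `ν`, while the
variation of `μ` is finite.
-/

/-- The sum of the total variations of the real and imaginary parts of `μ`. It is comparable to,
but in general larger than, the total variation of `μ`; being the sum of the four positive measures
in `cintegral`, it integrates exactly the functions integrable against each of them. -/
noncomputable def jordanVariation (μ : ComplexMeasure ℝ) : Measure ℝ :=
  (ComplexMeasure.re μ).totalVariation + (ComplexMeasure.im μ).totalVariation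

instance isFiniteMeasure_jordanVariation (μ : ComplexMeasure ℝ) :
    IsFiniteMeasure (jordanVariation μ) := by
  unfold jordanVariation SignedMeasure.totalVariation
  infer_instance

lemma cintegral_const_mul (μ : ComplexMeasure ℝ) (c : ℂ) (f : ℝ → ℂ) :
    cintegral μ (fun x => c * f x) = c * cintegral μ f := by
  simp only [cintegral, integral_const_mul]
  ring

section FubiniSub

variable {α β E : Type*} [MeasurableSpace α] [MeasurableSpace β] [NormedAddCommGroup E]
  [NormedSpace ℝ E] {ρ : Measure α} {m₁ m₂ : Measure β} [SFinite m₁] [SFinite m₂]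
  {F : α → β → E}

lemma integrable_integral_sub_integral (h₁ : Integrable (Function.uncurry F) (ρ.prod m₁))
    (h₂ : Integrable (Function.uncurry F) (ρ.prod m₂)) :
    Integrable (fun a => (∫ x, F a x ∂m₁) - ∫ x, F a x ∂m₂) ρ :=
  h₁.integral_prod_left.sub h₂.integral_prod_left

lemma integral_integral_sub_integral_swap [SFinite ρ]
    (h₁ : Integrable (Function.uncurry F) (ρ.prod m₁))
    (h₂ : Integrable (Function.uncurry F) (ρ.prod m₂)) :
    ∫ a, ((∫ x, F a x ∂m₁) - ∫ x, F a x ∂m₂) ∂ρ =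
      (∫ x, ∫ a, F a x ∂ρ ∂m₁) - ∫ x, ∫ a, F a x ∂ρ ∂m₂ := by
  rw [← integral_integral_swap h₁, ← integral_integral_swap h₂]
  exact integral_sub h₁.integral_prod_left h₂.integral_prod_left

end FubiniSub

section FubiniComplexMeasure

variable {α : Type*} [MeasurableSpace α] {ρ : Measure α} [SFinite ρ]
  {μ : ComplexMeasure ℝ} {F : α → ℝ → ℂ}

lemma integrable_prod_jordanVariation_iff {E : Type*} [NormedAddCommGroup E] {f : α × ℝ → E} :
    Integrable f (ρ.prod (jordanVariation μ)) ↔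
      (Integrable f (ρ.prod (ComplexMeasure.re μ).toJordanDecomposition.posPart) ∧
        Integrable f (ρ.prod (ComplexMeasure.re μ).toJordanDecomposition.negPart)) ∧
      Integrable f (ρ.prod (ComplexMeasure.im μ).toJordanDecomposition.posPart) ∧
        Integrable f (ρ.prod (ComplexMeasure.im μ).toJordanDecomposition.negPart) := by
  simp only [jordanVariation, SignedMeasure.totalVariation, Measure.prod_add,
    integrable_add_measure]

lemma integrable_cintegral (hF : Integrable (Function.uncurry F) (ρ.prod (jordanVariation μ))) :
    Integrable (fun a => cintegral μ (F a)) ρ := by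
  obtain ⟨⟨hrePos, hreNeg⟩, himPos, himNeg⟩ := integrable_prod_jordanVariation_iff.1 hF
  exact (integrable_integral_sub_integral hrePos hreNeg).add
    ((integrable_integral_sub_integral himPos himNeg).const_mul Complex.I)

lemma integral_cintegral_swap (hF : Integrable (Function.uncurry F) (ρ.prod (jordanVariation μ))) :
    ∫ a, cintegral μ (F a) ∂ρ = cintegral μ (fun x => ∫ a, F a x ∂ρ) := by
  obtain ⟨⟨hrePos, hreNeg⟩, himPos, himNeg⟩ := integrable_prod_jordanVariation_iff.1 hF
  simp only [cintegral]
  rw [integral_add (integrable_integral_sub_integral hrePos hreNeg)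
      ((integrable_integral_sub_integral himPos himNeg).const_mul Complex.I),
    integral_const_mul, integral_integral_sub_integral_swap hrePos hreNeg,
    integral_integral_sub_integral_swap himPos himNeg]

end FubiniComplexMeasure

lemma integrable_mul_fourier_kernel {ρ m : Measure ℝ} [IsFiniteMeasure m] {g : ℝ → ℂ}
    (hg : Integrable g ρ) :
    Integrable (Function.uncurry fun s ν : ℝ => g s * Complex.exp (-(Complex.I * ν * s)))
      (ρ.prod m) := by
  have norm_kernel_le (p : ℝ × ℝ) : ‖Complex.exp (-(Complex.I * p.2 * p.1))‖ ≤ 1 := by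
    simp [Complex.norm_exp]
  exact (hg.comp_fst m).mul_bdd (by fun_prop) (.of_forall norm_kernel_le)

lemma mul_cfourier (μ : ComplexMeasure ℝ) (c : ℂ) (s : ℝ) :
    c * cfourier μ s = cintegral μ (fun ν => c * Complex.exp (-(Complex.I * ν * s))) :=
  (cintegral_const_mul μ c _).symm

section Laplace

variable {z : ℂ}

lemma integrableOn_exp_I_mul_Ici (hz : 0 < z.im) :
    IntegrableOn (fun s : ℝ => Complex.exp (Complex.I * z * s)) (Set.Ici 0) := by
  rw [integrableOn_Ici_iff_integrableOn_Ioi]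
  exact integrableOn_exp_mul_complex_Ioi (by simpa using hz) 0

lemma integral_exp_I_mul_Ici (hz : 0 < z.im) :
    ∫ s in Set.Ici (0 : ℝ), Complex.exp (Complex.I * z * s) = Complex.I * z⁻¹ := by
  rw [integral_Ici_eq_integral_Ioi, integral_exp_mul_complex_Ioi (by simpa using hz)]
  simp [neg_div, mul_comm]

lemma I_mul_integral_exp_mul_fourier_kernel (hz : 0 < z.im) (ν : ℝ) :
    Complex.I * ∫ s in Set.Ici (0 : ℝ),
      Complex.exp (Complex.I * z * s) * Complex.exp (-(Complex.I * ν * s)) = ((ν : ℂ) - z)⁻¹ := by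
  have exp_mul_exp (s : ℝ) : Complex.exp (Complex.I * z * s) * Complex.exp (-(Complex.I * ν * s)) =
      Complex.exp (Complex.I * (z - ν) * s) := by
    rw [← Complex.exp_add]
    ring_nf
  simp only [exp_mul_exp]
  rw [integral_exp_I_mul_Ici (by simpa using hz), ← mul_assoc, Complex.I_mul_I, neg_one_mul,
    ← inv_neg, neg_sub]

end Laplace

/-- For every finite complex Borel measure `μ` on `ℝ` and every `z ∈ ℂ` with
`Im z > 0`, the function `s ↦ e^{izs}·μ̂(s)` is integrable on `[0,∞)`, where
`μ̂(s) := ∫ e^{−iνs} μ(dν)`, and the Borel transform of `μ` satisfies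
`∫ (ν − z)⁻¹ μ(dν) = i ∫₀^∞ e^{izs} μ̂(s) ds`. -/
theorem statement15 (μ : ComplexMeasure ℝ) (z : ℂ) (hz : 0 < z.im) :
    IntegrableOn (fun s : ℝ => Complex.exp (Complex.I * z * s) * cfourier μ s)
      (Set.Ici (0 : ℝ)) volume ∧
    cintegral μ (fun ν => ((ν : ℂ) - z)⁻¹)
      = Complex.I * ∫ s in Set.Ici (0 : ℝ), Complex.exp (Complex.I * z * s) * cfourier μ s := by
  have hF := integrable_mul_fourier_kernel (m := jordanVariation μ) (integrableOn_exp_I_mul_Ici hz)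
  simp only [mul_cfourier]
  refine ⟨integrable_cintegral hF, ?_⟩
  rw [integral_cintegral_swap hF, ← cintegral_const_mul]
  simp only [I_mul_integral_exp_mul_fourier_kernel hz]
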